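/- Let T₁, T₂ be ℂ-linear triangulated categories of finite type with split-generators G₁, G₂ respectively, and F_i a triangulated endofunctor of T_i with F_iⁿG_i ≇ 0 for all n ≥ 0 (i = 1, 2). If there exists an essentially surjective triangulated functor F': T₁ → T₂ such that F'F₁ ≅ F₂F', then h_t(F₂) ≤ h_t(F₁) for all t ∈ ℝ. -/

import Mathlib

/-!
Say that `M` builds `N` with weight `c` if `N` is a retract of an object glued from shifts `M⟦k⟧`
with `∑ exp (k t) = c`; then `δ(M, N)` is the infimum of such weights. Weights multiply when `M`
builds `N` and `N` builds `P`, so `δ(M, P) ≤ δ(M, N) δ(N, P)`, and triangulated functors do not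
increase `δ`. As `F₂ᵐ F' G₁ ≅ F' F₁ᵐ G₁`, this gives

`δ(G₂, F₂ᵐ G₂) ≤ δ(G₂, F' G₁) δ(F' G₁, F' F₁ᵐ G₁) δ(F₂ᵐ F' G₁, F₂ᵐ G₂)`
`             ≤ δ(G₂, F' G₁) δ(F' G₁, G₂) δ(G₁, F₁ᵐ G₁)`,

where `F' G₁` is again a split-generator, so that the factor independent of `m` is finite and does
not affect the exponential growth rate.

The octahedral axiom, which usually shows that weights add up along an extension `D ⟶ W ⟶ L`, is not
available in a pretriangulated category. Instead, starting from `𝟙 W`, cofibres `W ⟶ Q` of objects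
glued from cells are composed with morphisms that kill the cells of `D` and then those of `L`. The
resulting cofibre `W ⟶ Q` is zero, so `W` is a retract of the object obtained by gluing all these
cells.
-/

open CategoryTheory Limits Pretriangulated Filter
open scoped ENNReal

universe u v u₂ v₂

namespace CatEntropy

section Defs

variable (C : Type u) [Category.{v} C] [Preadditive C] [HasZeroObject C]
  [HasShift C ℤ] [∀ n : ℤ, (shiftFunctor C n).Additive] [Pretriangulated C]

/-- `C` is of finite type: for all objects `M, N`, the total dimension
`Σ_{n ∈ ℤ} dim_ℂ Hom(M, N⟦n⟧)` is finite. -/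
def IsFiniteType [Linear ℂ C] : Prop :=
  ∀ M N : C, {n : ℤ | ¬ Subsingleton (M ⟶ N⟦n⟧)}.Finite ∧
    ∀ n : ℤ, FiniteDimensional ℂ (M ⟶ N⟦n⟧)

/-- A set of objects is a thick triangulated subcategory: closed under isomorphisms,
shifts, cones and direct summands. -/
structure IsThick (S : Set C) : Prop where
  mem_of_iso : ∀ {X Y : C}, (X ≅ Y) → X ∈ S → Y ∈ S
  shift_mem : ∀ (X : C) (n : ℤ), X ∈ S → X⟦n⟧ ∈ S
  cone_mem : ∀ (T : Triangle C), T ∈ (distTriang C) → T.obj₁ ∈ S → T.obj₂ ∈ S → T.obj₃ ∈ S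
  summand_mem : ∀ (X Y : C), (X ⊞ Y) ∈ S → X ∈ S

/-- `⟨M⟩`, the smallest thick triangulated subcategory containing `M`. -/
def thickClosure (M : C) : Set C :=
  ⋂₀ {S : Set C | IsThick C S ∧ M ∈ S}

/-- `G` is a split-generator of `C` if `⟨G⟩ = C`. -/
def IsSplitGenerator (G : C) : Prop := ∀ X : C, X ∈ thickClosure C G

open Classical in
/-- The complexity `δ_{C,t}(M, N)` of `N` with respect to `M`. -/
noncomputable def complexity (t : ℝ) (M N : C) : ℝ≥0∞ :=
  if IsZero N then 0
  else if N ∈ thickClosure C M then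
    sInf {c : ℝ≥0∞ |
      ∃ (p : ℕ) (_ : 0 < p) (n : Fin p → ℤ) (A : Fin (p + 1) → C) (N' : C),
        IsZero (A 0) ∧ Nonempty (A (Fin.last p) ≅ N ⊞ N') ∧
        (∀ i : Fin p,
          ∃ (f : A i.castSucc ⟶ A i.succ) (g : A i.succ ⟶ M⟦n i⟧)
            (h : M⟦n i⟧ ⟶ (A i.castSucc)⟦(1 : ℤ)⟧),
              Triangle.mk f g h ∈ (distTriang C)) ∧
        c = ∑ i : Fin p, ENNReal.ofReal (Real.exp ((n i : ℝ) * t))}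
  else ⊤

/-- Iterated composition `Fⁿ` of an endofunctor. -/
def iter (F : C ⥤ C) : ℕ → C ⥤ C
  | 0 => 𝟭 C
  | n + 1 => iter F n ⋙ F

/-- The entropy `h_t(F)` of an endofunctor `F`, computed with the split-generator `G`
(the defining limit exists and agrees with the `limsup` used here). -/
noncomputable def entropy (F : C ⥤ C) (G : C) (t : ℝ) : EReal :=
  Filter.atTop.limsup fun m : ℕ =>
    (((m : ℝ)⁻¹ : ℝ) : EReal) * (complexity C t G ((iter C F m).obj G)).log

end Defs

section Pretriangulated

variable {C : Type u} [Category.{v} C] [Preadditive C] [HasZeroObject C]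
  [HasShift C ℤ] [∀ n : ℤ, (shiftFunctor C n).Additive] [Pretriangulated C]

lemma exists_iso_biprod_of_retract {X Y : C} (r : Retract X Y) :
    ∃ X' : C, Nonempty (Y ≅ X ⊞ X') := by
  obtain ⟨X', g, h, hT⟩ := distinguished_cocone_triangle r.i
  have h_zero : h = 0 := Triangle.mor₃_eq_zero_of_mono₁ _ hT r.splitMono.mono
  obtain ⟨e, -, -⟩ := exists_iso_binaryBiproduct_of_distTriang _ hT h_zero
  exact ⟨X', ⟨e⟩⟩

lemma nonempty_retract_of_distTriang_of_mor₂_eq_zero {T : Triangle C} (hT : T ∈ distTriang C)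
    (h : T.mor₂ = 0) : Nonempty (Retract T.obj₂ T.obj₁) := by
  obtain ⟨s, hs⟩ := Triangle.coyoneda_exact₂ T hT (𝟙 T.obj₂) (by rw [h, comp_zero])
  exact ⟨s, T.mor₁, hs.symm⟩

/-- A weak form of the octahedral axiom: `κ` is not claimed to be a cofibre of `v`. -/
lemma exists_cofiber_comp_of_attach {E W Q Z : C} {φ : E ⟶ W} {π : W ⟶ Q} {δ : Q ⟶ E⟦(1 : ℤ)⟧}
    (hT : Triangle.mk φ π δ ∈ distTriang C) (v : Z ⟶ Q) :
    ∃ (E' Q' : C) (i : E ⟶ E') (p : E' ⟶ Z) (φ' : E' ⟶ W) (κ : Q ⟶ Q') (δ' : Q' ⟶ E'⟦(1 : ℤ)⟧),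
      Triangle.mk i p (v ≫ δ) ∈ distTriang C ∧ Triangle.mk φ' (π ≫ κ) δ' ∈ distTriang C ∧
        v ≫ κ = 0 := by
  obtain ⟨E', i, p, hE'⟩ := distinguished_cocone_triangle₂ (v ≫ δ)
  obtain ⟨φ', hiφ', hpv⟩ : ∃ φ' : E' ⟶ W, i ≫ φ' = 𝟙 E ≫ φ ∧ p ≫ v = φ' ≫ π :=
    complete_distinguished_triangle_morphism₂ _ _ hE' hT (𝟙 E) v
      (show (v ≫ δ) ≫ (𝟙 E)⟦(1 : ℤ)⟧' = v ≫ δ by simp)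
  obtain ⟨Q', π', δ', hT'⟩ := distinguished_cocone_triangle φ'
  obtain ⟨w, hπw, -⟩ : ∃ w : Q ⟶ Q', π ≫ w = 𝟙 W ≫ π' ∧ δ ≫ i⟦(1 : ℤ)⟧' = w ≫ δ' :=
    complete_distinguished_triangle_morphism _ _ hT hT' i (𝟙 W)
      (show φ ≫ 𝟙 W = i ≫ φ' by rw [hiφ', Category.comp_id, Category.id_comp])
  rw [Category.id_comp] at hπw
  have hπδ : π ≫ δ = 0 := comp_distTriang_mor_zero₂₃ _ hT
  have hφ'π' : φ' ≫ π' = 0 := comp_distTriang_mor_zero₁₂ _ hT'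
  have hpvw : p ≫ v ≫ w = 0 := by rw [reassoc_of% hpv, hπw, hφ'π']
  obtain ⟨ψ, hψ⟩ : ∃ ψ : E⟦(1 : ℤ)⟧ ⟶ Q', v ≫ w = (v ≫ δ) ≫ ψ :=
    Triangle.yoneda_exact₃ _ hE' (v ≫ w) hpvw
  -- Subtracting `δ ≫ ψ` makes `w` vanish on `v` without changing `π ≫ w`.
  have hπκ : π ≫ (w - δ ≫ ψ) = π' := by
    rw [Preadditive.comp_sub, hπw, reassoc_of% hπδ, zero_comp, sub_zero]
  have hvκ : v ≫ (w - δ ≫ ψ) = 0 := by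
    rw [Preadditive.comp_sub, hψ, Category.assoc, sub_self]
  exact ⟨E', Q', i, p, φ', w - δ ≫ ψ, δ', hE', hπκ ▸ hT', hvκ⟩

/-- The contribution `exp (k t)` of a cell `M⟦k⟧` to the complexity. -/
noncomputable def weight (t : ℝ) (k : ℤ) : ℝ≥0∞ :=
  ENNReal.ofReal (Real.exp ((k : ℝ) * t))

lemma weight_zero (t : ℝ) : weight t 0 = 1 := by simp [weight]

lemma weight_add (t : ℝ) (k n : ℤ) : weight t (k + n) = weight t k * weight t n := by
  rw [weight, weight, weight, ← ENNReal.ofReal_mul (Real.exp_nonneg _), ← Real.exp_add,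
    Int.cast_add, add_mul]

variable {t : ℝ} {c c' : ℝ≥0∞} {M N P : C}

/-- `IsTower t M c A`: the object `A` is obtained from a zero object by successively attaching
cells `M⟦k⟧` of total weight `c`. Only the total weight of the cells is recorded. -/
inductive IsTower (t : ℝ) (M : C) : ℝ≥0∞ → C → Prop
  | zero {A : C} (hA : IsZero A) : IsTower t M 0 A
  | attach {c : ℝ≥0∞} {A B : C} {k : ℤ} (f : A ⟶ B) (g : B ⟶ M⟦k⟧) (h : M⟦k⟧ ⟶ A⟦(1 : ℤ)⟧)
      (hT : Triangle.mk f g h ∈ distTriang C) (hA : IsTower t M c A) :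
      IsTower t M (c + weight t k) B

/-- `IsBuilt t M c N`: the object `N` is a retract of a tower over `M` of total weight `c`. -/
def IsBuilt (t : ℝ) (M : C) (c : ℝ≥0∞) (N : C) : Prop :=
  ∃ A : C, IsTower t M c A ∧ Nonempty (Retract N A)

namespace IsTower

variable {A : C}

lemma attach_of_iso {B Z : C} {k : ℤ} (hA : IsTower t M c A) (f : A ⟶ B) (g : B ⟶ Z)
    (h : Z ⟶ A⟦(1 : ℤ)⟧) (hT : Triangle.mk f g h ∈ distTriang C) (e : Z ≅ M⟦k⟧) :
    IsTower t M (c + weight t k) B :=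
  .attach f (g ≫ e.hom) (e.inv ≫ h)
    (isomorphic_distinguished _ hT _ (Triangle.isoMk _ _ (Iso.refl _) (Iso.refl _) e.symm
      (show f ≫ 𝟙 B = 𝟙 A ≫ f by simp) (show (g ≫ e.hom) ≫ e.inv = 𝟙 B ≫ g by simp)
      (show (e.inv ≫ h) ≫ (𝟙 A)⟦(1 : ℤ)⟧' = e.inv ≫ h by simp)))
    hA

lemma self (t : ℝ) (M : C) : IsTower t M 1 M := by
  have hM := (zero (t := t) (M := M) (isZero_zero C)).attach_of_iso _ _ _
    (contractible_distinguished₁ M) ((shiftFunctorZero C ℤ).app M).symm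
  rwa [zero_add, weight_zero] at hM

lemma ne_top (hA : IsTower t M c A) : c ≠ ⊤ := by
  induction hA with
  | zero => exact ENNReal.zero_ne_top
  | attach _ _ _ _ _ ih => exact ENNReal.add_ne_top.2 ⟨ih, ENNReal.ofReal_ne_top⟩

lemma shift (hA : IsTower t M c A) (n : ℤ) : IsTower t M (c * weight t n) (A⟦n⟧) := by
  induction hA with
  | zero hA => simpa only [zero_mul] using zero ((shiftFunctor C n).map_isZero hA)
  | @attach _ _ _ k f g h hT _ ih =>
    rw [add_mul, ← weight_add]
    exact ih.attach_of_iso _ _ _ (Triangle.shift_distinguished _ hT n)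
      ((shiftFunctorAdd C k n).app M).symm

lemma map {D : Type u₂} [Category.{v₂} D] [Preadditive D] [HasZeroObject D] [HasShift D ℤ]
    [∀ n : ℤ, (shiftFunctor D n).Additive] [Pretriangulated D] (F : C ⥤ D) [F.CommShift ℤ]
    [F.IsTriangulated] (hA : IsTower t M c A) : IsTower t (F.obj M) c (F.obj A) := by
  induction hA with
  | zero hA => exact .zero (F.map_isZero hA)
  | @attach _ _ _ k f g h hT _ ih =>
    exact ih.attach_of_iso _ _ _ (F.map_distinguished _ hT) ((F.commShiftIso k).app M)

lemma isBuilt (hA : IsTower t M c A) : IsBuilt t M c A :=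
  ⟨A, hA, ⟨.refl A⟩⟩

end IsTower

/-- `π : W ⟶ Q` is the cofibre of a morphism to `W` from a tower over `M` of total weight `c`. -/
def IsTowerCofiber (t : ℝ) (M : C) (c : ℝ≥0∞) {W Q : C} (π : W ⟶ Q) : Prop :=
  ∃ (E : C) (φ : E ⟶ W) (δ : Q ⟶ E⟦(1 : ℤ)⟧),
    Triangle.mk φ π δ ∈ distTriang C ∧ IsTower t M c E

namespace IsTowerCofiber

variable {W Q : C} {π : W ⟶ Q}

lemma id (t : ℝ) (M W : C) : IsTowerCofiber t M 0 (𝟙 W) :=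
  ⟨_, _, _, contractible_distinguished₁ W, .zero (isZero_zero C)⟩

lemma exists_comp_cell_eq_zero {k : ℤ} (hπ : IsTowerCofiber t M c π) (v : M⟦k⟧ ⟶ Q) :
    ∃ (Q' : C) (κ : Q ⟶ Q'), v ≫ κ = 0 ∧ IsTowerCofiber t M (c + weight t k) (π ≫ κ) := by
  obtain ⟨E, φ, δ, hT, hE⟩ := hπ
  obtain ⟨E', Q', i, p, φ', κ, δ', hE', hT', hvκ⟩ := exists_cofiber_comp_of_attach hT v
  exact ⟨Q', κ, hvκ, E', φ', δ', hT', hE.attach i p _ hE'⟩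

lemma exists_comp_tower_eq_zero {A : C} (hA : IsTower t M c' A) (hπ : IsTowerCofiber t M c π)
    (q : A ⟶ Q) :
    ∃ (Q' : C) (κ : Q ⟶ Q'), q ≫ κ = 0 ∧ IsTowerCofiber t M (c + c') (π ≫ κ) := by
  induction hA with
  | zero hA =>
    refine ⟨Q, 𝟙 Q, hA.eq_of_src _ _, ?_⟩
    rwa [add_zero, Category.comp_id]
  | @attach c' A B k f g h hT _ ih =>
    obtain ⟨Q₁, κ₁, hfqκ₁, hκ₁⟩ := ih (f ≫ q)
    rw [Category.assoc] at hfqκ₁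
    obtain ⟨v, hv⟩ : ∃ v : M⟦k⟧ ⟶ Q₁, q ≫ κ₁ = g ≫ v := Triangle.yoneda_exact₂ _ hT _ hfqκ₁
    obtain ⟨Q₂, κ₂, hvκ₂, hκ₂⟩ := hκ₁.exists_comp_cell_eq_zero v
    refine ⟨Q₂, κ₁ ≫ κ₂, ?_, ?_⟩
    · rw [reassoc_of% hv, hvκ₂, comp_zero]
    · rwa [← add_assoc, ← Category.assoc]

lemma exists_comp_eq_zero {L : C} (hπ : IsTowerCofiber t M c π) (hL : IsBuilt t M c' L)
    (q : L ⟶ Q) :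
    ∃ (Q' : C) (κ : Q ⟶ Q'), q ≫ κ = 0 ∧ IsTowerCofiber t M (c + c') (π ≫ κ) := by
  obtain ⟨A, hA, ⟨r⟩⟩ := hL
  obtain ⟨Q', κ, hrqκ, hκ⟩ := exists_comp_tower_eq_zero hA hπ (r.r ≫ q)
  refine ⟨Q', κ, ?_, hκ⟩
  rw [← r.retract_assoc (q ≫ κ), ← Category.assoc r.r, hrqκ, comp_zero]

lemma isBuilt_of_eq_zero (hπ : IsTowerCofiber t M c π) (h : π = 0) : IsBuilt t M c W := by
  obtain ⟨E, φ, δ, hT, hE⟩ := hπ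
  exact ⟨E, hE, nonempty_retract_of_distTriang_of_mor₂_eq_zero hT h⟩

end IsTowerCofiber

namespace IsBuilt

lemma of_retract (hN : IsBuilt t M c N) (r : Retract P N) : IsBuilt t M c P := by
  obtain ⟨A, hA, ⟨s⟩⟩ := hN
  exact ⟨A, hA, ⟨r.trans s⟩⟩

lemma ne_top (hN : IsBuilt t M c N) : c ≠ ⊤ := by
  obtain ⟨A, hA, -⟩ := hN
  exact hA.ne_top

lemma shift (hN : IsBuilt t M c N) (n : ℤ) : IsBuilt t M (c * weight t n) (N⟦n⟧) := by
  obtain ⟨A, hA, ⟨r⟩⟩ := hN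
  exact ⟨_, hA.shift n, ⟨r.map _⟩⟩

lemma map {D : Type u₂} [Category.{v₂} D] [Preadditive D] [HasZeroObject D] [HasShift D ℤ]
    [∀ n : ℤ, (shiftFunctor D n).Additive] [Pretriangulated D] (F : C ⥤ D) [F.CommShift ℤ]
    [F.IsTriangulated] (hN : IsBuilt t M c N) : IsBuilt t (F.obj M) c (F.obj N) := by
  obtain ⟨A, hA, ⟨r⟩⟩ := hN
  exact ⟨_, hA.map F, ⟨r.map F⟩⟩

lemma of_distTriang {T : Triangle C} (hT : T ∈ distTriang C) (h₁ : IsBuilt t M c T.obj₁)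
    (h₃ : IsBuilt t M c' T.obj₃) : IsBuilt t M (c + c') T.obj₂ := by
  obtain ⟨Q, κ, hκ, hcofib⟩ := (IsTowerCofiber.id t M T.obj₂).exists_comp_eq_zero h₁ T.mor₁
  obtain ⟨μ, rfl⟩ := Triangle.yoneda_exact₂ T hT κ hκ
  obtain ⟨Q', κ', hμκ', hcofib'⟩ := hcofib.exists_comp_eq_zero h₃ μ
  rw [zero_add] at hcofib'
  refine hcofib'.isBuilt_of_eq_zero ?_
  rw [Category.id_comp, Category.assoc, hμκ', comp_zero]

lemma trans (hN : IsBuilt t M c N) (hP : IsBuilt t N c' P) : IsBuilt t M (c * c') P := by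
  obtain ⟨A, hA, ⟨r⟩⟩ := hP
  suffices IsBuilt t M (c * c') A from this.of_retract r
  clear r
  induction hA with
  | zero hA => simpa only [mul_zero] using (IsTower.zero hA).isBuilt
  | attach f g h hT _ ih =>
    rw [mul_add]
    exact of_distTriang hT ih (hN.shift _)

end IsBuilt

namespace IsThick

variable {S : Set C}

lemma mem_of_retract (hS : IsThick C S) (hN : N ∈ S) (r : Retract P N) : P ∈ S := by
  obtain ⟨P', ⟨e⟩⟩ := exists_iso_biprod_of_retract r
  exact hS.summand_mem P P' (hS.mem_of_iso e hN)

lemma mem_of_isZero (hS : IsThick C S) (hM : M ∈ S) (hN : IsZero N) : N ∈ S :=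
  hS.mem_of_retract hM (hN.retract M)

lemma mem_of_isTower (hS : IsThick C S) (hM : M ∈ S) (hN : IsTower t M c N) : N ∈ S := by
  induction hN with
  | zero hA => exact hS.mem_of_isZero hM hA
  | @attach _ A _ k f g h hT _ ih =>
    exact hS.cone_mem _ (inv_rot_of_distTriang _ hT) (hS.shift_mem _ _ (hS.shift_mem _ _ hM)) ih

end IsThick

lemma isThick_setOf_isBuilt (t : ℝ) (M : C) : IsThick C {N | ∃ c, IsBuilt t M c N} where
  mem_of_iso := fun e ⟨c, h⟩ => ⟨c, h.of_retract (.ofIso e.symm)⟩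
  shift_mem := fun _ n ⟨_, h⟩ => ⟨_, h.shift n⟩
  cone_mem := fun _ hT ⟨_, h₁⟩ ⟨_, h₂⟩ =>
    ⟨_, .of_distTriang (rot_of_distTriang _ hT) h₂ (h₁.shift 1)⟩
  summand_mem := fun _ _ ⟨c, h⟩ => ⟨c, h.of_retract ⟨biprod.inl, biprod.fst, biprod.inl_fst⟩⟩

lemma mem_thickClosure_iff_exists_isBuilt (t : ℝ) :
    N ∈ thickClosure C M ↔ ∃ c, IsBuilt t M c N := by
  constructor
  · exact fun hN => hN _ ⟨isThick_setOf_isBuilt t M, 1, (IsTower.self t M).isBuilt⟩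
  · rintro ⟨c, A, hA, ⟨r⟩⟩ S ⟨hS, hM⟩
    exact hS.mem_of_retract (hS.mem_of_isTower hM hA) r

lemma exists_mem_thickClosure_of_essSurj {B : Type u₂} [Category.{v₂} B] (F : B ⥤ C) [F.EssSurj]
    (Y : C) : ∃ X : B, Y ∈ thickClosure C (F.obj X) :=
  ⟨F.objPreimage Y, fun _ hS => hS.1.mem_of_iso (F.objObjPreimageIso Y) hS.2⟩

/-- The sequences `A₀, …, A_p` of iterated extensions by cells `M⟦n₁⟧, …, M⟦n_p⟧` that occur in
the definition of `complexity`; the cell indices are shifted to start from `0`. -/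
def IsCellChain (M : C) {p : ℕ} (n : Fin p → ℤ) (A : Fin (p + 1) → C) : Prop :=
  IsZero (A 0) ∧ ∀ i : Fin p,
    ∃ (f : A i.castSucc ⟶ A i.succ) (g : A i.succ ⟶ M⟦n i⟧)
      (h : M⟦n i⟧ ⟶ (A i.castSucc)⟦(1 : ℤ)⟧), Triangle.mk f g h ∈ distTriang C

lemma IsCellChain.isTower (t : ℝ) {p : ℕ} {n : Fin p → ℤ} {A : Fin (p + 1) → C}
    (hA : IsCellChain M n A) : IsTower t M (∑ i, weight t (n i)) (A (Fin.last p)) := by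
  induction p with
  | zero => exact .zero hA.1
  | succ p ih =>
    obtain ⟨f, g, h, hT⟩ := hA.2 (Fin.last p)
    rw [Fin.sum_univ_castSucc]
    exact (ih (A := fun i => A i.castSucc) ⟨hA.1, fun i => hA.2 i.castSucc⟩).attach f g h hT

lemma IsCellChain.snoc {p : ℕ} {n : Fin p → ℤ} {A : Fin (p + 1) → C} (hA : IsCellChain M n A)
    {B : C} {k : ℤ} (f : A (Fin.last p) ⟶ B) (g : B ⟶ M⟦k⟧)
    (h : M⟦k⟧ ⟶ (A (Fin.last p))⟦(1 : ℤ)⟧) (hT : Triangle.mk f g h ∈ distTriang C) :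
    IsCellChain M (Fin.snoc n k : Fin (p + 1) → ℤ) (Fin.snoc A B : Fin (p + 2) → C) := by
  refine ⟨?_, Fin.lastCases ?_ fun i => ?_⟩
  · rw [← Fin.castSucc_zero, Fin.snoc_castSucc (α := fun _ => C)]
    exact hA.1
  · rw [Fin.succ_last, Fin.snoc_castSucc (α := fun _ => C), Fin.snoc_last (α := fun _ => C),
      Fin.snoc_last (α := fun _ => ℤ)]
    exact ⟨f, g, h, hT⟩
  · rw [Fin.succ_castSucc, Fin.snoc_castSucc (α := fun _ => C),
      Fin.snoc_castSucc (α := fun _ => C), Fin.snoc_castSucc (α := fun _ => ℤ)]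
    exact hA.2 i

lemma IsTower.exists_isCellChain {B : C} (hB : IsTower t M c B) :
    ∃ (p : ℕ) (n : Fin p → ℤ) (A : Fin (p + 1) → C),
      IsCellChain M n A ∧ A (Fin.last p) = B ∧ c = ∑ i, weight t (n i) := by
  induction hB with
  | @zero B hB => exact ⟨0, Fin.elim0, fun _ => B, ⟨hB, fun i => i.elim0⟩, rfl, by simp⟩
  | @attach c _ B k f g h hT _ ih =>
    obtain ⟨p, n, A, hA, rfl, rfl⟩ := ih
    refine ⟨p + 1, Fin.snoc n k, Fin.snoc A B, hA.snoc f g h hT,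
      Fin.snoc_last (α := fun _ => C) _ _, ?_⟩
    simp only [Fin.sum_univ_castSucc, Fin.snoc_castSucc, Fin.snoc_last]

lemma isBuilt_iff_exists_isCellChain :
    IsBuilt t M c N ↔ ∃ (p : ℕ) (n : Fin p → ℤ) (A : Fin (p + 1) → C) (N' : C),
      IsCellChain M n A ∧ Nonempty (A (Fin.last p) ≅ N ⊞ N') ∧ c = ∑ i, weight t (n i) := by
  constructor
  · rintro ⟨B, hB, ⟨r⟩⟩
    obtain ⟨p, n, A, hA, rfl, hc⟩ := hB.exists_isCellChain
    obtain ⟨N', he⟩ := exists_iso_biprod_of_retract r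
    exact ⟨p, n, A, N', hA, he, hc⟩
  · rintro ⟨p, n, A, N', hA, ⟨e⟩, rfl⟩
    exact ⟨_, hA.isTower t, ⟨biprod.inl ≫ e.inv, e.hom ≫ biprod.fst, by simp⟩⟩

lemma complexity_eq_sInf (t : ℝ) (M N : C) :
    complexity C t M N = sInf {c | IsBuilt t M c N} := by
  rw [complexity]
  split_ifs with hN hNM
  · have h_zero : IsBuilt t M 0 N := (IsTower.zero hN).isBuilt
    exact (bot_unique (sInf_le h_zero)).symm
  · congr 1
    ext c
    simp only [Set.mem_ofPred_eq, isBuilt_iff_exists_isCellChain]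
    constructor
    · rintro ⟨p, -, n, A, N', hA₀, he, hA, hc⟩
      exact ⟨p, n, A, N', ⟨hA₀, hA⟩, he, hc⟩
    · rintro ⟨p, n, A, N', ⟨hA₀, hA⟩, ⟨e⟩, hc⟩
      have hp : p ≠ 0 := by
        rintro rfl
        exact hN ((biprod_isZero_iff N N').1 (hA₀.of_iso e.symm)).1
      exact ⟨p, hp.bot_lt, n, A, N', hA₀, ⟨e⟩, hA, hc⟩
  · have h_empty : {c | IsBuilt t M c N} = ∅ :=
      Set.eq_empty_of_forall_notMem fun c hc =>
        hNM ((mem_thickClosure_iff_exists_isBuilt t).2 ⟨c, hc⟩)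
    rw [h_empty, sInf_empty]

lemma complexity_ne_top (t : ℝ) (hN : N ∈ thickClosure C M) : complexity C t M N ≠ ⊤ := by
  obtain ⟨c, hc⟩ := (mem_thickClosure_iff_exists_isBuilt t).1 hN
  rw [complexity_eq_sInf]
  exact ne_top_of_le_ne_top hc.ne_top (sInf_le hc)

lemma complexity_le_of_retract (t : ℝ) (M : C) (r : Retract P N) :
    complexity C t M P ≤ complexity C t M N := by
  rw [complexity_eq_sInf, complexity_eq_sInf]
  exact sInf_le_sInf fun c hc => hc.of_retract r

lemma complexity_le_mul (t : ℝ) (hN : N ∈ thickClosure C M) (hP : P ∈ thickClosure C N) :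
    complexity C t M P ≤ complexity C t M N * complexity C t N P := by
  obtain ⟨c, hc⟩ := (mem_thickClosure_iff_exists_isBuilt t).1 hN
  obtain ⟨c', hc'⟩ := (mem_thickClosure_iff_exists_isBuilt t).1 hP
  simp only [complexity_eq_sInf, sInf_eq_iInf']
  exact ENNReal.le_iInf_mul_iInf ⟨⟨c, hc⟩, hc.ne_top⟩ ⟨⟨c', hc'⟩, hc'.ne_top⟩
    fun a b => iInf_le_of_le ⟨_, a.2.trans b.2⟩ le_rfl

end Pretriangulated

section Functors

variable {C : Type u} [Category.{v} C] [Preadditive C] [HasZeroObject C]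
  [HasShift C ℤ] [∀ n : ℤ, (shiftFunctor C n).Additive] [Pretriangulated C]
  {D : Type u₂} [Category.{v₂} D] [Preadditive D] [HasZeroObject D]
  [HasShift D ℤ] [∀ n : ℤ, (shiftFunctor D n).Additive] [Pretriangulated D]
  {M N : C}

lemma map_mem_thickClosure (F : C ⥤ D) [F.CommShift ℤ] [F.IsTriangulated]
    (hN : N ∈ thickClosure C M) : F.obj N ∈ thickClosure D (F.obj M) := by
  obtain ⟨c, hc⟩ := (mem_thickClosure_iff_exists_isBuilt 0).1 hN
  exact (mem_thickClosure_iff_exists_isBuilt 0).2 ⟨c, hc.map F⟩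

lemma complexity_map_le (F : C ⥤ D) [F.CommShift ℤ] [F.IsTriangulated] (t : ℝ) (M N : C) :
    complexity D t (F.obj M) (F.obj N) ≤ complexity C t M N := by
  rw [complexity_eq_sInf, complexity_eq_sInf]
  exact sInf_le_sInf fun c hc => hc.map F

lemma IsSplitGenerator.map {G : C} (hG : IsSplitGenerator C G) (F : C ⥤ D) [F.CommShift ℤ]
    [F.IsTriangulated] (hF : ∀ Y : D, ∃ X : C, Y ∈ thickClosure D (F.obj X)) :
    IsSplitGenerator D (F.obj G) := by
  intro Y S hS
  obtain ⟨X, hY⟩ := hF Y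
  have hX : F.obj X ∈ S := map_mem_thickClosure F (hG X) S hS
  exact hY S ⟨hS.1, hX⟩

lemma iter_mem_thickClosure (F : C ⥤ C) [F.CommShift ℤ] [F.IsTriangulated]
    (hN : N ∈ thickClosure C M) (m : ℕ) :
    (iter C F m).obj N ∈ thickClosure C ((iter C F m).obj M) := by
  induction m with
  | zero => exact hN
  | succ m ih => exact map_mem_thickClosure F ih

lemma complexity_iter_le (F : C ⥤ C) [F.CommShift ℤ] [F.IsTriangulated] (t : ℝ) (M N : C)
    (m : ℕ) :
    complexity C t ((iter C F m).obj M) ((iter C F m).obj N) ≤ complexity C t M N := by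
  induction m with
  | zero => exact le_rfl
  | succ m ih => exact (complexity_map_le F t _ _).trans ih

end Functors

lemma nonempty_iter_comp_iso {C : Type u} [Category.{v} C] {D : Type u₂} [Category.{v₂} D]
    {F₁ : C ⥤ C} {F₂ : D ⥤ D} {F' : C ⥤ D} (e : F₁ ⋙ F' ≅ F' ⋙ F₂) (m : ℕ) :
    Nonempty (iter C F₁ m ⋙ F' ≅ F' ⋙ iter D F₂ m) := by
  induction m with
  | zero => exact ⟨F'.leftUnitor ≪≫ F'.rightUnitor.symm⟩
  | succ m ih =>
    obtain ⟨j⟩ := ih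
    exact ⟨Functor.isoWhiskerLeft (iter C F₁ m) e ≪≫ Functor.isoWhiskerRight j F₂⟩

lemma entropy_eq_expGrowthSup {C : Type u} [Category.{v} C] [Preadditive C] [HasZeroObject C]
    [HasShift C ℤ] [∀ n : ℤ, (shiftFunctor C n).Additive] [Pretriangulated C]
    (F : C ⥤ C) (G : C) (t : ℝ) :
    entropy C F G t =
      ExpGrowth.expGrowthSup fun m => complexity C t G ((iter C F m).obj G) := by
  simp only [entropy, ExpGrowth.expGrowthSup, EReal.div_eq_inv_mul, EReal.coe_inv,
    EReal.coe_coe_eq_natCast]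

theorem statement_14_general {C₁ : Type u} [Category.{v} C₁] [Preadditive C₁] [HasZeroObject C₁]
    [HasShift C₁ ℤ] [∀ n : ℤ, (shiftFunctor C₁ n).Additive] [Pretriangulated C₁]
    {C₂ : Type u₂} [Category.{v₂} C₂] [Preadditive C₂] [HasZeroObject C₂]
    [HasShift C₂ ℤ] [∀ n : ℤ, (shiftFunctor C₂ n).Additive] [Pretriangulated C₂]
    (G₁ : C₁) (hG₁ : IsSplitGenerator C₁ G₁) (G₂ : C₂) (hG₂ : IsSplitGenerator C₂ G₂)
    (F₁ : C₁ ⥤ C₁) (F₂ : C₂ ⥤ C₂) [F₂.CommShift ℤ] [F₂.IsTriangulated]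
    (F' : C₁ ⥤ C₂) [F'.CommShift ℤ] [F'.IsTriangulated]
    (hF' : ∀ Y : C₂, ∃ X : C₁, Y ∈ thickClosure C₂ (F'.obj X))
    (hcomm : Nonempty ((F₁ ⋙ F') ≅ (F' ⋙ F₂))) (t : ℝ) :
    entropy C₂ F₂ G₂ t ≤ entropy C₁ F₁ G₁ t := by
  obtain ⟨e⟩ := hcomm
  let δ₁ := complexity C₁ t
  let δ₂ := complexity C₂ t
  let H := F'.obj G₁
  have hH : IsSplitGenerator C₂ H := hG₁.map F' hF'
  have hK : δ₂ G₂ H * δ₂ H G₂ ≠ ⊤ :=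
    ENNReal.mul_ne_top (complexity_ne_top t (hG₂ H)) (complexity_ne_top t (hH G₂))
  rw [entropy_eq_expGrowthSup, entropy_eq_expGrowthSup]
  refine ExpGrowth.expGrowthSup_le_of_eventually_le hK (.of_forall fun m => ?_)
  let Φ₁ := iter C₁ F₁ m
  let Φ₂ := iter C₂ F₂ m
  obtain ⟨j⟩ := nonempty_iter_comp_iso e m
  have h_iter : δ₂ H (Φ₂.obj H) ≤ δ₁ G₁ (Φ₁.obj G₁) :=
    (complexity_le_of_retract t H (.ofIso (j.app G₁).symm)).trans (complexity_map_le F' t _ _)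
  calc δ₂ G₂ (Φ₂.obj G₂)
      ≤ δ₂ G₂ H * δ₂ H (Φ₂.obj G₂) := complexity_le_mul t (hG₂ _) (hH _)
    _ ≤ δ₂ G₂ H * (δ₂ H (Φ₂.obj H) * δ₂ (Φ₂.obj H) (Φ₂.obj G₂)) := by
        gcongr
        exact complexity_le_mul t (hH _) (iter_mem_thickClosure F₂ (hH G₂) m)
    _ ≤ δ₂ G₂ H * (δ₁ G₁ (Φ₁.obj G₁) * δ₂ H G₂) := by
        gcongr
        exact complexity_iter_le F₂ t H G₂ m
    _ = δ₂ G₂ H * δ₂ H G₂ * δ₁ G₁ (Φ₁.obj G₁) := by ring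

/-- If an essentially surjective triangulated functor `F' : T₁ ⥤ T₂`
intertwines `F₁` and `F₂`, then `h_t(F₂) ≤ h_t(F₁)`. -/
theorem statement_14 {C₁ : Type u} [Category.{v} C₁] [Preadditive C₁] [HasZeroObject C₁]
    [HasShift C₁ ℤ] [∀ n : ℤ, (shiftFunctor C₁ n).Additive] [Pretriangulated C₁] [Linear ℂ C₁]
    {C₂ : Type u₂} [Category.{v₂} C₂] [Preadditive C₂] [HasZeroObject C₂]
    [HasShift C₂ ℤ] [∀ n : ℤ, (shiftFunctor C₂ n).Additive] [Pretriangulated C₂] [Linear ℂ C₂]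
    (hC₁ : ∃ X : C₁, ¬ IsZero X) (hC₂ : ∃ X : C₂, ¬ IsZero X)
    (hft₁ : IsFiniteType C₁) (hft₂ : IsFiniteType C₂)
    (G₁ : C₁) (hG₁ : IsSplitGenerator C₁ G₁) (G₂ : C₂) (hG₂ : IsSplitGenerator C₂ G₂)
    (F₁ : C₁ ⥤ C₁) [F₁.Additive] [F₁.Linear ℂ] [F₁.CommShift ℤ] [F₁.IsTriangulated]
    (F₂ : C₂ ⥤ C₂) [F₂.Additive] [F₂.Linear ℂ] [F₂.CommShift ℤ] [F₂.IsTriangulated]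
    (h₁ : ∀ n : ℕ, ¬ IsZero ((iter C₁ F₁ n).obj G₁))
    (h₂ : ∀ n : ℕ, ¬ IsZero ((iter C₂ F₂ n).obj G₂))
    (F' : C₁ ⥤ C₂) [F'.Additive] [F'.Linear ℂ] [F'.CommShift ℤ] [F'.IsTriangulated]
    [F'.EssSurj]
    (hcomm : Nonempty ((F₁ ⋙ F') ≅ (F' ⋙ F₂))) (t : ℝ) :
    entropy C₂ F₂ G₂ t ≤ entropy C₁ F₁ G₁ t := by
  exact statement_14_general G₁ hG₁ G₂ hG₂ F₁ F₂ F'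
    (exists_mem_thickClosure_of_essSurj F') hcomm t

end CatEntropy
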